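/- If a d.c.e. real γ is weakly d.c.e. speedable, then γ is covered by some Solovay test (equivalently: a Martin-Löf random d.c.e. real is not weakly d.c.e. speedable). -/

import Mathlib

open Filter

/-- A computable approximation of a real `α`: a computable sequence of
rationals in `[0,1]` converging to `α`. -/
def IsCompApprox (a : ℕ → ℚ) (α : ℝ) : Prop :=
  Computable a ∧ (∀ s, a s ∈ Set.Icc (0 : ℚ) 1) ∧
    Tendsto (fun s => (a s : ℝ)) atTop (nhds α)

/-- A d.c.e. approximation: a computable approximation with bounded variation. -/
def IsDCEApprox (a : ℕ → ℚ) (α : ℝ) : Prop :=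
  IsCompApprox a α ∧ Summable (fun s => |(a (s + 1) : ℝ) - (a s : ℝ)|)

/-- A computable order: a nondecreasing unbounded computable function. -/
def IsComputableOrder (f : ℕ → ℕ) : Prop :=
  Computable f ∧ Monotone f ∧ Tendsto f atTop atTop

/-- The liminf (in the extended reals) of `|(α - a (f s)) / (α - a s)|`. -/
noncomputable def speedLiminf (a : ℕ → ℚ) (f : ℕ → ℕ) (α : ℝ) : EReal :=
  Filter.liminf (fun s => ((|(α - (a (f s) : ℝ)) / (α - (a s : ℝ))| : ℝ) : EReal)) atTop

/-- A computable approximation `a` of `α` is `ρ`-speedable. -/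
def IsRhoSpeedable (a : ℕ → ℚ) (α : ℝ) (ρ : ℚ) : Prop :=
  (∃ q : ℚ, α = (q : ℝ)) ∨
    ∃ f, IsComputableOrder f ∧ speedLiminf a f α ≤ (((ρ : ℝ) : EReal))

/-- A computable approximation is speedable if it is `ρ`-speedable for some rational
`ρ ∈ [0,1)`. -/
def IsSpeedable (a : ℕ → ℚ) (α : ℝ) : Prop :=
  ∃ ρ : ℚ, 0 ≤ ρ ∧ ρ < 1 ∧ IsRhoSpeedable a α ρ

/-- A Solovay test: computable sequences of rationals `l i ≤ r i` in `[0,1]`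
with `Σ (r i - l i) < ∞`. -/
structure SolovayTest where
  l : ℕ → ℚ
  r : ℕ → ℚ
  comp_l : Computable l
  comp_r : Computable r
  mem_l : ∀ i, l i ∈ Set.Icc (0 : ℚ) 1
  mem_r : ∀ i, r i ∈ Set.Icc (0 : ℚ) 1
  le : ∀ i, l i ≤ r i
  summable : Summable (fun i => (r i : ℝ) - (l i : ℝ))

/-- A real `γ` is covered by a Solovay test if `γ ∈ [l i, r i]` for infinitely many `i`. -/
def SolovayTest.Covers (T : SolovayTest) (γ : ℝ) : Prop :=
  ∃ᶠ i in atTop, γ ∈ Set.Icc (T.l i : ℝ) (T.r i : ℝ)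

/-- The sequence of endpoints `l 0, r 0, l 1, r 1, …` of a Solovay test. -/
def SolovayTest.endpoints (T : SolovayTest) (n : ℕ) : ℚ :=
  if n % 2 = 0 then T.l (n / 2) else T.r (n / 2)

theorem SW.comp_find {α : Type*} [Primcodable α] {p : α → ℕ → Bool} (hp : Computable₂ p)
    (h : ∀ a, ∃ n, p a n = true) : Computable fun a => Nat.find (h a) := by
  have h1 : Partrec fun a => Nat.rfind (fun n => (Part.some (p a n) : Part Bool)) :=
    Partrec.rfind (p := fun a n => Part.some (p a n)) hp
  refine Partrec.of_eq h1 fun a => ?_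
  change _ = Part.some (Nat.find (h a))
  rw [Part.eq_some_iff]
  refine Nat.mem_rfind.2 ⟨?_, ?_⟩
  · simpa using (Nat.find_spec (h a)).symm
  · intro m hm
    have := Nat.find_min (h a) hm
    simp at this ⊢
    exact this

/-- membership in the range of the raw code -/
def SW.RR (m : ℕ) : Prop :=
  0 < m.unpair.2 ∧ ∀ k < m.unpair.2 + 1, k ∣ (m.unpair.1 + 1) / 2 → k ∣ m.unpair.2 → k ≤ 1

def SW.raw (q : ℚ) : ℕ := @Encodable.encode ℚ Rat.instEncodable q

theorem SW.enc_int (z : ℤ) : (0 ≤ z ∧ Encodable.encode z = 2 * z.natAbs) ∨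
    (z < 0 ∧ Encodable.encode z + 1 = 2 * z.natAbs) := by
  rcases z with n | n
  · left
    refine ⟨Int.natCast_nonneg n, ?_⟩
    rfl
  · right
    refine ⟨Int.negSucc_lt_zero n, ?_⟩
    change 2 * n + 1 + 1 = 2 * (n + 1)
    ring

theorem SW.raw_eq (q : ℚ) : SW.raw q = Nat.pair (Encodable.encode q.num) q.den := rfl

theorem SW.natAbs_eq (z : ℤ) : (Encodable.encode z + 1) / 2 = z.natAbs := by
  rcases SW.enc_int z with h | h <;> omega

theorem SW.coprime_iff (a d : ℕ) (hd : 0 < d) :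
    a.Coprime d ↔ ∀ k < d + 1, k ∣ a → k ∣ d → k ≤ 1 := by
  constructor
  · intro h k _ h1 h2
    have := Nat.dvd_gcd h1 h2
    rw [h] at this
    exact Nat.le_of_dvd one_pos this
  · intro h
    have h1 := h (Nat.gcd a d) (by have := Nat.gcd_le_right a hd; omega)
      (Nat.gcd_dvd_left _ _) (Nat.gcd_dvd_right _ _)
    have h2 := Nat.gcd_pos_of_pos_right a hd
    unfold Nat.Coprime
    omega

theorem SW.RR_iff (m : ℕ) : SW.RR m ↔ m ∈ Set.range SW.raw := by
  unfold SW.RR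
  constructor
  · rintro ⟨h1, h2⟩
    rw [← SW.coprime_iff _ _ h1] at h2
    obtain ⟨z, hz⟩ : ∃ z : ℤ, Encodable.encode z = m.unpair.1 :=
      ⟨Equiv.intEquivNat.symm m.unpair.1, Equiv.apply_symm_apply _ _⟩
    rw [← hz, SW.natAbs_eq] at h2
    refine ⟨⟨z, m.unpair.2, h1.ne', h2⟩, ?_⟩
    rw [SW.raw_eq]
    simp [hz]
  · rintro ⟨q, rfl⟩
    rw [SW.raw_eq]
    simp only [Nat.unpair_pair, SW.natAbs_eq]
    rw [← SW.coprime_iff _ _ q.pos]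
    exact ⟨q.pos, q.reduced⟩

theorem SW.RR_prim : PrimrecPred SW.RR := by
  unfold SW.RR
  have hd : PrimrecRel (fun k (m : ℕ) => k ∣ (m.unpair.1 + 1) / 2 → k ∣ m.unpair.2 → k ≤ 1) := by
    have e1 : PrimrecRel (fun k (m : ℕ) => ((m.unpair.1 + 1) / 2) % k = 0) := by
      refine PrimrecRel.comp Primrec.eq ?_ (Primrec.const 0)
      refine Primrec.nat_mod.comp ?_ Primrec.fst
      refine Primrec.nat_div.comp ?_ (Primrec.const 2)
      exact Primrec.succ.comp (Primrec.fst.comp (Primrec.unpair.comp Primrec.snd))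
    have e2 : PrimrecRel (fun k (m : ℕ) => m.unpair.2 % k = 0) := by
      refine PrimrecRel.comp Primrec.eq ?_ (Primrec.const 0)
      refine Primrec.nat_mod.comp ?_ Primrec.fst
      exact (Primrec.snd.comp (Primrec.unpair.comp Primrec.snd))
    have e3 : PrimrecRel (fun k (m : ℕ) => k ≤ 1) :=
      PrimrecRel.comp Primrec.nat_le Primrec.fst (Primrec.const 1)
    refine PrimrecPred.of_eq ((PrimrecPred.not e1).or ((PrimrecPred.not e2).or e3)) ?_
    intro p
    simp only [Nat.dvd_iff_mod_eq_zero]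
    tauto
  refine PrimrecPred.and ?_ ?_
  · exact PrimrecRel.comp Primrec.nat_lt (Primrec.const 0) (Primrec.snd.comp Primrec.unpair)
  · exact PrimrecRel.comp hd.forall_lt (Primrec.succ.comp (Primrec.snd.comp Primrec.unpair)) Primrec.id

noncomputable instance SW.decRR : DecidablePred SW.RR := Classical.decPred _

theorem SW.count_comp : Computable (Nat.count SW.RR) := by
  have h : Primrec (fun n : ℕ => (Nat.rec 0 (fun k ih => if SW.RR k then ih + 1 else ih) n : ℕ)) := by
    refine Primrec.nat_rec₁ (f := fun k ih => if SW.RR k then ih + 1 else ih) 0 ?_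
    refine Primrec.ite (SW.RR_prim.comp Primrec.fst) (Primrec.succ.comp Primrec.snd) Primrec.snd
  refine h.to_comp.of_eq fun n => ?_
  induction n with
  | zero => simp
  | succ n ih =>
    rw [Nat.count_succ, ← ih]
    simp only
    split_ifs <;> rfl

theorem SW.enc_count (q : ℚ) :
    @Encodable.encode ℚ Rat.instDenumerable.toEncodable q = Nat.count SW.RR (SW.raw q) := by
  have h : @Encodable.encode ℚ Rat.instDenumerable.toEncodable q =
    (List.range (SW.raw q)).countP (fun y => @decide (y ∈ Set.range (@Encodable.encode ℚ Rat.instEncodable))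
      (Encodable.decidableRangeEncode ℚ y)) := rfl
  rw [h, Nat.count_eq_card_filter_range, List.countP_eq_length_filter]
  change _ = (List.filter _ (List.range _)).length
  congr 2
  funext y
  have := SW.RR_iff y
  change _ ↔ y ∈ Set.range (@Encodable.encode ℚ Rat.instEncodable) at this
  exact decide_eq_decide.2 this.symm

theorem SW.raw_comp : Computable SW.raw := by
  have hp : Computable₂ (fun (q : ℚ) (m : ℕ) =>
      decide (SW.RR m ∧ Nat.count SW.RR m = @Encodable.encode ℚ Rat.instDenumerable.toEncodable q)) := by
    have h1 : Computable (fun x : ℚ × ℕ => decide (SW.RR x.2)) :=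
      SW.RR_prim.decide.to_comp.comp Computable.snd
    have h2 : Computable (fun x : ℚ × ℕ => decide (Nat.count SW.RR x.2 =
        @Encodable.encode ℚ Rat.instDenumerable.toEncodable x.1)) :=
      (PrimrecRel.decide Primrec.eq).to_comp.comp (SW.count_comp.comp Computable.snd)
        (Computable.encode.comp Computable.fst)
    refine (Primrec.and.to_comp.comp h1 h2).of_eq ?_
    intro x
    simp
  have hs : ∀ q m, SW.RR m ∧ Nat.count SW.RR m = @Encodable.encode ℚ Rat.instDenumerable.toEncodable q ↔
      m = SW.raw q := by
    intro q m
    constructor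
    · rintro ⟨h1, h2⟩
      rw [SW.enc_count] at h2
      exact Nat.count_injective h1 ((SW.RR_iff _).2 ⟨q, rfl⟩) h2
    · rintro rfl
      exact ⟨(SW.RR_iff _).2 ⟨q, rfl⟩, (SW.enc_count q).symm⟩
  refine (SW.comp_find hp (fun q => ⟨SW.raw q, by simpa using (hs q _).2 rfl⟩)).of_eq fun q => ?_
  have := Nat.find_spec (p := fun m => decide (SW.RR m ∧ Nat.count SW.RR m = @Encodable.encode ℚ Rat.instDenumerable.toEncodable q) = true) ⟨SW.raw q, by simpa using (hs q _).2 rfl⟩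
  rw [decide_eq_true_iff, hs] at this
  exact this

theorem SW.pnd : ∃ P N D : ℚ → ℕ, Computable P ∧ Computable N ∧ Computable D ∧ (∀ q, 0 < D q) ∧
    ∀ q, q = ((P q : ℚ) - N q) / D q := by
  have h1 : Computable fun q => (SW.raw q).unpair.1 :=
    Computable.fst.comp (Primrec.unpair.to_comp.comp SW.raw_comp)
  have h2 : Computable fun q => (SW.raw q).unpair.2 :=
    Computable.snd.comp (Primrec.unpair.to_comp.comp SW.raw_comp)
  have p1 : Primrec fun z : ℕ => if z % 2 = 0 then z / 2 else 0 :=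
    Primrec.ite (PrimrecRel.comp Primrec.eq (Primrec.nat_mod.comp Primrec.id (Primrec.const 2)) (Primrec.const 0))
      (Primrec.nat_div.comp Primrec.id (Primrec.const 2)) (Primrec.const 0)
  have p2 : Primrec fun z : ℕ => if z % 2 = 0 then 0 else (z + 1) / 2 :=
    Primrec.ite (PrimrecRel.comp Primrec.eq (Primrec.nat_mod.comp Primrec.id (Primrec.const 2)) (Primrec.const 0))
      (Primrec.const 0) (Primrec.nat_div.comp Primrec.succ (Primrec.const 2))
  refine ⟨_, _, _, p1.to_comp.comp h1, p2.to_comp.comp h1, h2, ?_, ?_⟩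
  · intro q
    simpa [SW.raw_eq] using q.pos
  · intro q
    simp only [SW.raw_eq, Nat.unpair_pair]
    have key : (((if Encodable.encode q.num % 2 = 0 then Encodable.encode q.num / 2 else 0 : ℕ) : ℤ)
      - ((if Encodable.encode q.num % 2 = 0 then 0 else (Encodable.encode q.num + 1) / 2 : ℕ) : ℤ)) = q.num := by
      rcases SW.enc_int q.num with h | h <;> split_ifs <;> omega
    have key2 : (((if Encodable.encode q.num % 2 = 0 then Encodable.encode q.num / 2 else 0 : ℕ) : ℚ)
      - ((if Encodable.encode q.num % 2 = 0 then 0 else (Encodable.encode q.num + 1) / 2 : ℕ) : ℚ)) = q.num := by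
      exact_mod_cast congrArg (Int.cast : ℤ → ℚ) key
    rw [key2, Rat.num_div_den]

theorem SW.comp_frac {α : Type*} [Primcodable α] {f : α → ℚ} {p n d : α → ℕ} (hp : Computable p)
    (hn : Computable n) (hd : Computable d) (hd0 : ∀ x, 0 < d x)
    (hf : ∀ x, f x = ((p x : ℚ) - n x) / d x) : Computable f := by
  obtain ⟨P, N, D, hP, hN, hD, hD0, hq⟩ := SW.pnd
  have add := Primrec.nat_add.to_comp
  have mul := Primrec.nat_mul.to_comp
  have ho : Computable (Denumerable.ofNat ℚ) := (Primrec.ofNat ℚ).to_comp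
  have hb : Computable₂ (fun (x : α) (m : ℕ) =>
      decide (P (Denumerable.ofNat ℚ m) * d x + n x * D (Denumerable.ofNat ℚ m) =
        p x * D (Denumerable.ofNat ℚ m) + N (Denumerable.ofNat ℚ m) * d x)) := by
    have i1 : Computable (fun x : α × ℕ => P (Denumerable.ofNat ℚ x.2)) := hP.comp (ho.comp Computable.snd)
    have i2 : Computable (fun x : α × ℕ => N (Denumerable.ofNat ℚ x.2)) := hN.comp (ho.comp Computable.snd)
    have i3 : Computable (fun x : α × ℕ => D (Denumerable.ofNat ℚ x.2)) := hD.comp (ho.comp Computable.snd)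
    have j1 : Computable (fun x : α × ℕ => p x.1) := hp.comp Computable.fst
    have j2 : Computable (fun x : α × ℕ => n x.1) := hn.comp Computable.fst
    have j3 : Computable (fun x : α × ℕ => d x.1) := hd.comp Computable.fst
    exact (PrimrecRel.decide Primrec.eq).to_comp.comp (add.comp (mul.comp i1 j3) (mul.comp j2 i3))
      (add.comp (mul.comp j1 i3) (mul.comp i2 j3))
  have hs : ∀ x (q : ℚ), P q * d x + n x * D q = p x * D q + N q * d x ↔ q = f x := by
    intro x q
    rw [hf]
    have e : q = ((p x : ℚ) - n x) / d x ↔ ((P q : ℚ) - N q) / D q = ((p x : ℚ) - n x) / d x := by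
      rw [← hq q]
    rw [e]
    have h1 : (D q : ℚ) ≠ 0 := by exact_mod_cast (hD0 q).ne'
    have h2 : (d x : ℚ) ≠ 0 := by exact_mod_cast (hd0 x).ne'
    rw [div_eq_div_iff h1 h2, ← @Nat.cast_inj ℚ]
    push_cast
    constructor <;> intro h <;> linarith
  have hex : ∀ x, ∃ m, decide (P (Denumerable.ofNat ℚ m) * d x + n x * D (Denumerable.ofNat ℚ m) =
        p x * D (Denumerable.ofNat ℚ m) + N (Denumerable.ofNat ℚ m) * d x) = true := by
    intro x
    refine ⟨@Encodable.encode ℚ Rat.instDenumerable.toEncodable (f x), ?_⟩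
    rw [decide_eq_true_iff, hs, Denumerable.ofNat_encode]
  refine (ho.comp (SW.comp_find hb hex)).of_eq fun x => ?_
  have := Nat.find_spec (hex x)
  rw [decide_eq_true_iff, hs] at this
  exact this

section
variable {α : Type*} [Primcodable α] {f g : α → ℚ}

theorem SW.comp_sub (hf : Computable f) (hg : Computable g) : Computable fun x => f x - g x := by
  obtain ⟨P, N, D, hP, hN, hD, hD0, hq⟩ := SW.pnd
  have add := Primrec.nat_add.to_comp
  have mul := Primrec.nat_mul.to_comp
  refine SW.comp_frac
    (add.comp (mul.comp (hP.comp hf) (hD.comp hg)) (mul.comp (hN.comp hg) (hD.comp hf)))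
    (add.comp (mul.comp (hP.comp hg) (hD.comp hf)) (mul.comp (hN.comp hf) (hD.comp hg)))
    (mul.comp (hD.comp hf) (hD.comp hg)) (fun x => Nat.mul_pos (hD0 _) (hD0 _)) ?_
  intro x
  have h1 : (D (f x) : ℚ) ≠ 0 := by exact_mod_cast (hD0 _).ne'
  have h2 : (D (g x) : ℚ) ≠ 0 := by exact_mod_cast (hD0 _).ne'
  have e1 := hq (f x)
  have e2 := hq (g x)
  rw [eq_div_iff h1] at e1
  rw [eq_div_iff h2] at e2
  push_cast
  rw [eq_div_iff (mul_ne_zero h1 h2)]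
  linear_combination (D (g x) : ℚ) * e1 - (D (f x) : ℚ) * e2

theorem SW.comp_mul (hf : Computable f) (hg : Computable g) : Computable fun x => f x * g x := by
  obtain ⟨P, N, D, hP, hN, hD, hD0, hq⟩ := SW.pnd
  have add := Primrec.nat_add.to_comp
  have mul := Primrec.nat_mul.to_comp
  refine SW.comp_frac
    (add.comp (mul.comp (hP.comp hf) (hP.comp hg)) (mul.comp (hN.comp hg) (hN.comp hf)))
    (add.comp (mul.comp (hP.comp hg) (hN.comp hf)) (mul.comp (hP.comp hf) (hN.comp hg)))
    (mul.comp (hD.comp hf) (hD.comp hg)) (fun x => Nat.mul_pos (hD0 _) (hD0 _)) ?_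
  intro x
  have h1 : (D (f x) : ℚ) ≠ 0 := by exact_mod_cast (hD0 _).ne'
  have h2 : (D (g x) : ℚ) ≠ 0 := by exact_mod_cast (hD0 _).ne'
  have e1 := hq (f x)
  have e2 := hq (g x)
  rw [eq_div_iff h1] at e1
  rw [eq_div_iff h2] at e2
  push_cast
  rw [eq_div_iff (mul_ne_zero h1 h2)]
  linear_combination (g x * D (g x) : ℚ) * e1 + ((P (f x) : ℚ) - N (f x)) * e2

theorem SW.comp_le (hf : Computable f) (hg : Computable g) :
    Computable fun x => decide (f x ≤ g x) := by
  obtain ⟨P, N, D, hP, hN, hD, hD0, hq⟩ := SW.pnd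
  have add := Primrec.nat_add.to_comp
  have mul := Primrec.nat_mul.to_comp
  refine ((PrimrecRel.decide Primrec.nat_le).to_comp.comp
    (add.comp (mul.comp (hP.comp hf) (hD.comp hg)) (mul.comp (hN.comp hg) (hD.comp hf)))
    (add.comp (mul.comp (hP.comp hg) (hD.comp hf)) (mul.comp (hN.comp hf) (hD.comp hg)))).of_eq ?_
  intro x
  rw [decide_eq_decide]
  have h1 : (0 : ℚ) < D (f x) := by exact_mod_cast (hD0 _)
  have h2 : (0 : ℚ) < D (g x) := by exact_mod_cast (hD0 _)
  have e : f x ≤ g x ↔ ((P (f x) : ℚ) - N (f x)) / D (f x) ≤ ((P (g x) : ℚ) - N (g x)) / D (g x) := by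
    rw [← hq (f x), ← hq (g x)]
  rw [e, div_le_div_iff₀ h1 h2, ← @Nat.cast_le ℚ]
  push_cast
  constructor <;> intro h <;> linarith

theorem SW.comp_max (hf : Computable f) (hg : Computable g) : Computable fun x => max (f x) (g x) := by
  refine (Computable.cond (SW.comp_le hf hg) hg hf).of_eq fun x => ?_
  by_cases h : f x ≤ g x
  · simp [h]
  · simp [h, max_eq_left (not_le.1 h).le]

theorem SW.comp_min (hf : Computable f) (hg : Computable g) : Computable fun x => min (f x) (g x) := by
  refine (Computable.cond (SW.comp_le hf hg) hf hg).of_eq fun x => ?_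
  by_cases h : f x ≤ g x
  · simp [h]
  · simp [h, min_eq_right (not_le.1 h).le]
end

theorem SW.comp_pow : Computable fun n : ℕ => (1 / 2 : ℚ) ^ n := by
  refine (Computable.nat_rec (f := fun n : ℕ => n) (g := fun _ => (1 : ℚ))
    (h := fun _ y => y.2 * (1 / 2)) Computable.id (Computable.const 1) ?_).of_eq ?_
  · exact SW.comp_mul (Computable.snd.comp Computable.snd) (Computable.const _)
  · intro n
    induction n with
    | zero => simp
    | succ n ih => rw [pow_succ, ← ih]

/-- the test from two computable sequences -/
theorem SW.test_of {x y : ℕ → ℚ} {γ : ℝ} (hx : Computable x) (hy : Computable y)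
    (hx1 : ∀ s, x s ∈ Set.Icc (0 : ℚ) 1) (hy1 : ∀ s, y s ∈ Set.Icc (0 : ℚ) 1)
    (hs : Summable fun s => |(x s : ℝ) - y s|)
    (hc : ∃ᶠ s in atTop, ((x s : ℝ) ≤ γ ∧ γ ≤ y s) ∨ ((y s : ℝ) ≤ γ ∧ γ ≤ x s)) :
    ∃ T : SolovayTest, T.Covers γ := by
  refine ⟨⟨fun s => min (x s) (y s), fun s => max (x s) (y s), SW.comp_min hx hy, SW.comp_max hx hy,
    fun i => ⟨le_min (hx1 i).1 (hy1 i).1, (min_le_left _ _).trans (hx1 i).2⟩,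
    fun i => ⟨(hx1 i).1.trans (le_max_left _ _), max_le (hx1 i).2 (hy1 i).2⟩,
    fun i => min_le_max, ?_⟩, ?_⟩
  · refine hs.congr fun i => ?_
    push_cast
    rw [max_sub_min_eq_abs, abs_sub_comm]
  · refine hc.mono fun s h => ?_
    simp only [Set.mem_Icc, Rat.cast_min, Rat.cast_max, min_le_iff, le_max_iff]
    tauto

theorem SW.one_side {a : ℕ → ℚ} {γ : ℝ} (ha : IsDCEApprox a γ)
    (hn : ¬ ∃ T : SolovayTest, T.Covers γ) :
    (∀ᶠ s in atTop, (a s : ℝ) < γ) ∨ (∀ᶠ s in atTop, γ < (a s : ℝ)) := by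
  obtain ⟨⟨h1, h2, h3⟩, h4⟩ := ha
  have hc : ¬ ∃ᶠ s in atTop, ((a (s+1) : ℝ) ≤ γ ∧ γ ≤ a s) ∨ ((a s : ℝ) ≤ γ ∧ γ ≤ a (s+1)) :=
    fun hc => hn (SW.test_of (h1.comp Computable.succ) h1 (fun s => h2 _) h2 h4 hc)
  rw [not_frequently, eventually_atTop] at hc
  obtain ⟨n, hc⟩ := hc
  rcases lt_or_ge (a n : ℝ) γ with h | h
  · left
    refine eventually_atTop.2 ⟨n, fun s hs => ?_⟩
    induction s, hs using Nat.le_induction with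
    | base => exact h
    | succ s hs ih =>
      by_contra h'
      exact hc s hs (Or.inr ⟨ih.le, not_lt.1 h'⟩)
  · right
    have : ∀ s, n ≤ s → γ ≤ (a s : ℝ) := by
      intro s hs
      induction s, hs using Nat.le_induction with
      | base => exact h
      | succ s hs ih =>
        by_contra h'
        exact hc s hs (Or.inl ⟨(not_le.1 h').le, ih⟩)
    refine eventually_atTop.2 ⟨n, fun s hs => ?_⟩
    refine lt_of_le_of_ne (this s hs) fun h' => ?_
    exact hc s hs (Or.inr ⟨h'.ge, this _ (by omega)⟩)

theorem SW.between {x y : ℕ → ℚ} {γ : ℝ} (hx : IsCompApprox x γ) (hy : IsCompApprox y γ)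
    (hc : ∀ᶠ s in atTop, ((x s : ℝ) ≤ γ ∧ γ ≤ y s) ∨ ((y s : ℝ) ≤ γ ∧ γ ≤ x s)) :
    ∃ T : SolovayTest, T.Covers γ := by
  obtain ⟨x1, x2, x3⟩ := hx
  obtain ⟨y1, y2, y3⟩ := hy
  have hb : Computable₂ (fun i j : ℕ =>
      decide (max (x (i + j)) (y (i + j)) - min (x (i + j)) (y (i + j)) ≤ (1 / 2 : ℚ) ^ i)) := by
    have k : Computable (fun p : ℕ × ℕ => p.1 + p.2) := Primrec.nat_add.to_comp
    exact SW.comp_le (SW.comp_sub (SW.comp_max (x1.comp k) (y1.comp k))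
      (SW.comp_min (x1.comp k) (y1.comp k))) (SW.comp_pow.comp Computable.fst)
  have hex : ∀ i : ℕ, ∃ j : ℕ,
      decide (max (x (i + j)) (y (i + j)) - min (x (i + j)) (y (i + j)) ≤ (1 / 2 : ℚ) ^ i) = true := by
    intro i
    have ht : Tendsto (fun s => |(x s : ℝ) - y s|) atTop (nhds 0) := by
      simpa using (x3.sub y3).abs
    have hpos : (0 : ℝ) < (1 / 2 : ℝ) ^ i := by positivity
    obtain ⟨n, hn⟩ := eventually_atTop.1 (ht.eventually (gt_mem_nhds hpos))
    refine ⟨n, ?_⟩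
    have := hn (i + n) (by omega)
    rw [decide_eq_true_iff, max_sub_min_eq_abs, abs_sub_comm]
    have h2 : ((|x (i + n) - y (i + n)| : ℚ) : ℝ) ≤ (((1 / 2 : ℚ) ^ i : ℚ) : ℝ) := by
      push_cast
      exact this.le
    exact_mod_cast h2
  have hj := SW.comp_find hb hex
  have hk : Computable fun i => i + Nat.find (hex i) := Primrec.nat_add.to_comp.comp Computable.id hj
  refine SW.test_of (x1.comp hk) (y1.comp hk) (fun s => x2 _) (fun s => y2 _) ?_ ?_
  · refine Summable.of_nonneg_of_le (fun i => abs_nonneg _) (fun i => ?_)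
      (summable_geometric_two)
    have := Nat.find_spec (hex i)
    rw [decide_eq_true_iff, max_sub_min_eq_abs, abs_sub_comm] at this
    have h2 : ((|x (i + Nat.find (hex i)) - y (i + Nat.find (hex i))| : ℚ) : ℝ) ≤ (((1 / 2 : ℚ) ^ i : ℚ) : ℝ) := by
      exact_mod_cast this
    push_cast at h2
    exact h2
  · have ht : Tendsto (fun i => i + Nat.find (hex i)) atTop atTop :=
      tendsto_atTop_mono (fun i => Nat.le_add_right _ _) tendsto_id
    exact (ht.eventually hc).frequently

/-- the extrapolated sequence, clamped -/
theorem SW.extrap {a b : ℕ → ℚ} {γ : ℝ} (hγ : γ ∈ Set.Ioo (0 : ℝ) 1) (k : ℚ) (ha : IsDCEApprox a γ)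
    (hb : IsDCEApprox b γ) :
    IsDCEApprox (fun s => max 0 (min 1 (a s - k * (a s - b s)))) γ := by
  obtain ⟨⟨a1, a2, a3⟩, a4⟩ := ha
  obtain ⟨⟨b1, b2, b3⟩, b4⟩ := hb
  refine ⟨⟨?_, ?_, ?_⟩, ?_⟩
  · exact SW.comp_max (Computable.const _) (SW.comp_min (Computable.const _)
      (SW.comp_sub a1 (SW.comp_mul (Computable.const _) (SW.comp_sub a1 b1))))
  · intro s
    exact ⟨le_max_left _ _, max_le zero_le_one (min_le_left _ _)⟩
  · have h : Tendsto (fun s => max (0 : ℝ) (min 1 ((a s : ℝ) - k * (a s - b s)))) atTop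
        (nhds (max 0 (min 1 (γ - k * (γ - γ))))) :=
      tendsto_const_nhds.max (tendsto_const_nhds.min (a3.sub ((a3.sub b3).const_mul _)))
    have e : max 0 (min 1 (γ - k * (γ - γ))) = γ := by
      rw [sub_self, mul_zero, sub_zero, min_eq_right hγ.2.le, max_eq_right hγ.1.le]
    rw [e] at h
    refine h.congr fun s => ?_
    push_cast
    rfl
  · refine Summable.of_nonneg_of_le (fun i => abs_nonneg _) (fun i => ?_)
      (a4.add ((a4.add b4).mul_left |(k : ℝ)|))
    push_cast
    refine (abs_max_sub_max_le_max _ _ _ _).trans ?_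
    rw [sub_self, abs_zero, max_eq_right (abs_nonneg _)]
    refine (abs_min_sub_min_le_max _ _ _ _).trans ?_
    rw [sub_self, abs_zero, max_eq_right (abs_nonneg _)]
    have e : ((a (i+1) : ℝ) - k * (a (i+1) - b (i+1)) - (a i - k * (a i - b i))) =
      (a (i+1) - a i) - k * ((a (i+1) - a i) - (b (i+1) - b i)) := by ring
    rw [e]
    refine (abs_sub _ _).trans ?_
    rw [abs_mul]
    gcongr
    exact abs_sub _ _

theorem SW.main (γ : ℝ) (hγ : γ ∈ Set.Ioo (0 : ℝ) 1) (ρ : ℚ) (hρ : ρ < 1) (a b : ℕ → ℚ)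
    (ha : IsDCEApprox a γ) (hb : IsDCEApprox b γ)
    (hf : ∃ᶠ s in atTop, |γ - (b s : ℝ)| ≤ ρ * |γ - (a s : ℝ)|) :
    ∃ T : SolovayTest, T.Covers γ := by
  by_contra hn
  have hp := SW.extrap hγ (1 / (1 - ρ)) ha hb
  set p : ℕ → ℚ := fun s => max 0 (min 1 (a s - (1 / (1 - ρ)) * (a s - b s))) with hpdef
  have hρ' : (0 : ℝ) < 1 - ρ := by
    have : (ρ : ℝ) < 1 := by exact_mod_cast hρ
    linarith
  have key : ∃ᶠ s in atTop, ((a s : ℝ) ≤ γ ∧ γ ≤ p s) ∨ ((p s : ℝ) ≤ γ ∧ γ ≤ a s) := by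
    refine hf.mono fun s h => ?_
    have hps : (p s : ℝ) = max 0 (min 1 ((a s : ℝ) - (1 / (1 - ρ)) * (a s - b s))) := by
      rw [hpdef]; push_cast; rfl
    rw [hps]
    rcases le_total (a s : ℝ) γ with h1 | h1
    · left
      refine ⟨h1, le_max_of_le_right (le_min hγ.2.le ?_)⟩
      rw [abs_of_nonneg (sub_nonneg.2 h1)] at h
      have := (le_abs_self _).trans h
      have h3 : γ - a s ≤ (b s - a s) / (1 - ρ) := by
        rw [le_div_iff₀ hρ']; linarith
      have h4 : (1 : ℝ) / (1 - ρ) * (a s - b s) = - ((b s - a s) / (1 - ρ)) := by ring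
      rw [h4]; linarith
    · right
      refine ⟨max_le hγ.1.le (min_le_of_right_le ?_), h1⟩
      rw [abs_of_nonpos (sub_nonpos.2 h1)] at h
      have := (neg_abs_le _).trans' (neg_le_neg h)
      have h3 : a s - γ ≤ (a s - b s) / (1 - ρ) := by
        rw [le_div_iff₀ hρ']; linarith
      have h4 : (1 : ℝ) / (1 - ρ) * (a s - b s) = ((a s - b s) / (1 - ρ)) := by ring
      rw [h4]; linarith
  refine hn (SW.between ha.1 hp.1 ?_)
  rcases SW.one_side ha hn with h1 | h1 <;> rcases SW.one_side hp hn with h2 | h2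
  · obtain ⟨s, h, h1, h2⟩ := (key.and_eventually (h1.and h2)).exists
    exfalso
    rcases h with h | h <;> linarith
  · exact (h1.and h2).mono fun s h => Or.inl ⟨h.1.le, h.2.le⟩
  · exact (h1.and h2).mono fun s h => Or.inr ⟨h.2.le, h.1.le⟩
  · obtain ⟨s, h, h1, h2⟩ := (key.and_eventually (h1.and h2)).exists
    exfalso
    rcases h with h | h <;> linarith

theorem weakly_dce_speedable_implies_nonrandom (γ : ℝ) (hγ : γ ∈ Set.Ioo (0 : ℝ) 1)
    (hdce : ∃ a : ℕ → ℚ, IsDCEApprox a γ)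
    (hweak : ∃ ρ : ℚ, 0 < ρ ∧ ρ < 1 ∧
      ∃ a b : ℕ → ℚ, IsDCEApprox a γ ∧ IsDCEApprox b γ ∧
        Filter.liminf (fun s => ((|(γ - (b s : ℝ)) / (γ - (a s : ℝ))| : ℝ) : EReal)) atTop
          ≤ (((ρ : ℝ) : EReal))) :
    ∃ T : SolovayTest, T.Covers γ := by
  obtain ⟨ρ, h0, h1, a, b, ha, hb, hl⟩ := hweak
  by_cases hr : ∃ q : ℚ, (q : ℝ) = γ
  · obtain ⟨q, rfl⟩ := hr
    have hq : q ∈ Set.Icc (0 : ℚ) 1 := ⟨by exact_mod_cast hγ.1.le, by exact_mod_cast hγ.2.le⟩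
    refine SW.test_of (x := fun _ => q) (y := fun _ => q) (Computable.const q) (Computable.const q)
      (fun _ => hq) (fun _ => hq) ?_ ?_
    · simpa using summable_zero
    · exact (Eventually.of_forall fun s => Or.inl ⟨le_rfl, le_rfl⟩).frequently
  · obtain ⟨ρ', h2, h3⟩ := exists_between h1
    refine SW.main γ hγ ρ' h3 a b ha hb ?_
    have hlt : Filter.liminf (fun s => ((|(γ - (b s : ℝ)) / (γ - (a s : ℝ))| : ℝ) : EReal)) atTop
          < (((ρ' : ℝ) : EReal)) := by
      refine hl.trans_lt ?_
      exact_mod_cast h2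
    refine (frequently_lt_of_liminf_lt (by isBoundedDefault) hlt).mono fun s hs => ?_
    have hs' : |(γ - (b s : ℝ)) / (γ - (a s : ℝ))| < ρ' := by exact_mod_cast hs
    have hne : 0 < |γ - (a s : ℝ)| := abs_pos.2 fun h => hr ⟨a s, by linarith⟩
    rw [abs_div, div_lt_iff₀ hne] at hs'
    exact hs'.le
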